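/- arXiv:2304.10795 — 2 statements merged into one kernel-verified Lean document; each statement's English description precedes it below -/
import Mathlib

section
/- Let Ŝ be a Neumann subgroup of M̂ = PGL(2,ℤ), and let ι : ℤ → ℤ and δ : ℤ → {1,−1} be the unique functions satisfying Ŝ τ^n ω = Ŝ τ^{ι(n)} ν^{(1−δ(n))/2} for all n ∈ ℤ. Then ι(ι(n) + δ(n)) = ι(n−1) − δ(n−1) for every n ∈ ℤ. -/
open Matrix Pointwise

noncomputable section

abbrev GL2Z := Matrix.GeneralLinearGroup (Fin 2) ℤ

/-- The subgroup {±I} of GL(2,ℤ), which is its center. -/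
def pmI : Subgroup GL2Z := Subgroup.zpowers (-1)

instance pmI_normal : pmI.Normal := by
  constructor
  rintro n hn g
  obtain ⟨k, hk⟩ := Subgroup.mem_zpowers_iff.mp hn
  have hc : Commute ((-1 : GL2Z) ^ k) g := (Commute.neg_one_left g).zpow_left k
  have : g * n * g⁻¹ = n := by
    rw [← hk, ← hc.eq]; group
  rw [this]; exact hn

/-- The extended modular group PGL(2,ℤ) = GL(2,ℤ)/{±I}. -/
abbrev Mhat := GL2Z ⧸ pmI

def pr : GL2Z →* Mhat := QuotientGroup.mk' pmI

def tauGL : GL2Z := ⟨!![1,1;0,1], !![1,-1;0,1], by decide, by decide⟩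
def nuGL : GL2Z := ⟨!![-1,0;0,1], !![-1,0;0,1], by decide, by decide⟩
def omegaGL : GL2Z := ⟨!![0,-1;1,0], !![0,1;-1,0], by decide, by decide⟩
def phiGL : GL2Z := ⟨!![0,-1;1,1], !![1,1;-1,0], by decide, by decide⟩

/-- τ, the class of [[1,1],[0,1]]. -/
def tau : Mhat := pr tauGL
/-- ν, the class of [[-1,0],[0,1]]. -/
def nu : Mhat := pr nuGL
/-- ω, the class of [[0,-1],[1,0]]. -/
def omega : Mhat := pr omegaGL
/-- φ, the class of [[0,-1],[1,1]]. -/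
def phi : Mhat := pr phiGL

/-- T̂ = ⟨τ, ν⟩, the stabilizer of ∞. -/
def That : Subgroup Mhat := Subgroup.closure {tau, nu}

/-- A Neumann subgroup of the extended modular group: a complement of T̂. -/
def IsNeumann (S : Subgroup Mhat) : Prop :=
  (S : Set Mhat) * (That : Set Mhat) = Set.univ ∧ S ⊓ That = ⊥

/-- The modular group PSL(2,ℤ), as the subgroup of PGL(2,ℤ) of classes of
matrices of determinant one. -/
def Msub : Subgroup Mhat :=
  Subgroup.map pr (MonoidHom.ker (Matrix.GeneralLinearGroup.det))

/-!
The two sides of the identity come from rewriting the right coset `S τⁿ (ω τ ω)` in two ways. Since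
`ν ^ ((1 - δ) / 2)` carries `τ` to `τ ^ δ` and commutes with `ω`, applying the coset relation at `n`
and then at `ι n + δ n` gives a coset with representative `τ ^ ι (ι n + δ n)` times a power of `ν`.
Since `τ ω τ ω = ω τ⁻¹`, applying it at `n - 1` gives instead the representative
`τ ^ (ι (n - 1) - δ (n - 1))` times a power of `ν`. As `S` meets `⟨τ, ν⟩` trivially and `τ` has
infinite order, the two exponents of `τ` agree.
-/

section Group

variable {G : Type*} [Group G] {τ ω ν : G}

lemma semiconjBy_zpow_of_eq_one_or_neg_one (h : SemiconjBy ν τ τ⁻¹) {d : ℤ}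
    (hd : d = 1 ∨ d = -1) : SemiconjBy (ν ^ ((1 - d) / 2)) τ (τ ^ d) := by
  rcases hd with rfl | rfl
  · simp
  · simpa using h

lemma eq_zero_of_zpow_eq_zpow (hν : SemiconjBy ν τ τ⁻¹) (hτ : ¬IsOfFinOrder τ) {a k : ℤ}
    (h : τ ^ a = ν ^ k) : a = 0 := by
  -- `ν` commutes with `ν ^ k = τ ^ a` and also inverts it.
  have hinv : τ ^ a = τ ^ (-a) := by
    have hcomm : ν * τ ^ a = τ ^ a * ν := h ▸ (Commute.self_zpow ν k).eq
    rw [(hν.zpow_right a).eq, _root_.inv_zpow'] at hcomm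
    exact (mul_right_cancel hcomm).symm
  have := injective_zpow_iff_not_isOfFinOrder.mpr hτ hinv
  lia

lemma eq_of_zpow_mul_zpow_eq (hν : SemiconjBy ν τ τ⁻¹) (hτ : ¬IsOfFinOrder τ)
    {a b k l : ℤ} (h : τ ^ a * ν ^ k = τ ^ b * ν ^ l) : a = b := by
  refine sub_eq_zero.mp (eq_zero_of_zpow_eq_zpow hν hτ (k := l - k) ?_)
  rw [sub_eq_neg_add, _root_.zpow_add, _root_.zpow_neg, _root_.zpow_sub, inv_mul_eq_iff_eq_mul,
    ← mul_assoc, eq_mul_inv_iff_mul_eq, h]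

open scoped RightActions

variable {S T : Subgroup G}

lemma eq_of_rightCoset_eq_of_disjoint (hST : Disjoint S T) {x y : G} (hx : x ∈ T) (hy : y ∈ T)
    (hxy : (S : Set G) <• x = (S : Set G) <• y) : x = y := by
  have hS : y * x⁻¹ ∈ S := (rightCoset_eq_iff S).mp hxy
  exact (mul_inv_eq_one.mp (Subgroup.disjoint_def.mp hST hS (T.mul_mem hy (T.inv_mem hx)))).symm

variable {v t x y : G}

lemma rightCoset_mul_omega_tau_omega (hv : SemiconjBy v τ t) (hωv : Commute ω v)
    (h : (S : Set G) <• (x * ω) = (S : Set G) <• (y * v)) :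
    (S : Set G) <• (x * (ω * τ * ω)) = (S : Set G) <• (y * t * ω * v) :=
  calc (S : Set G) <• (x * (ω * τ * ω))
      = (S : Set G) <• (x * ω) <• (τ * ω) := by simp only [rightCoset_assoc, mul_assoc]
    _ = (S : Set G) <• (y * v * (τ * ω)) := by rw [h, rightCoset_assoc]
    _ = (S : Set G) <• (y * t * ω * v) := by
      congr 2
      rw [mul_assoc _ ω, hωv.eq, mul_assoc y, ← mul_assoc v, hv.eq]
      simp only [mul_assoc]

lemma rightCoset_mul_tau_mul_omega_tau_omega (hv : SemiconjBy v τ t)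
    (hωτ : ω * τ * ω = τ⁻¹ * ω * τ⁻¹)
    (h : (S : Set G) <• (x * ω) = (S : Set G) <• (y * v)) :
    (S : Set G) <• (x * τ * (ω * τ * ω)) = (S : Set G) <• (y * t⁻¹ * v) :=
  calc (S : Set G) <• (x * τ * (ω * τ * ω))
      = (S : Set G) <• (x * ω) <• τ⁻¹ := by
        rw [hωτ, rightCoset_assoc]
        group
    _ = (S : Set G) <• (y * v * τ⁻¹) := by rw [h, rightCoset_assoc]
    _ = (S : Set G) <• (y * t⁻¹ * v) := by rw [mul_assoc, hv.inv_right.eq, mul_assoc]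

theorem neumann_iota_functional_equation_general (hν : SemiconjBy ν τ τ⁻¹) (hων : Commute ω ν)
    (hωτ : ω * τ * ω = τ⁻¹ * ω * τ⁻¹) (hτ : ¬IsOfFinOrder τ)
    (hS : Disjoint S (Subgroup.closure {τ, ν}))
    {ι δ : ℤ → ℤ} (hδ : ∀ n, δ n = 1 ∨ δ n = -1)
    (hcoset : ∀ n : ℤ, (τ ^ n * ω) * (τ ^ ι n * ν ^ ((1 - δ n) / 2))⁻¹ ∈ S) (n : ℤ) :
    ι (ι n + δ n) = ι (n - 1) - δ (n - 1) := by
  let e : ℤ → ℤ := fun m ↦ (1 - δ m) / 2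
  have coset_eq (m : ℤ) : (S : Set G) <• (τ ^ m * ω) = (S : Set G) <• (τ ^ ι m * ν ^ e m) :=
    ((rightCoset_eq_iff S).mpr (hcoset m)).symm
  have semiconj (m : ℤ) : SemiconjBy (ν ^ e m) τ (τ ^ δ m) :=
    semiconjBy_zpow_of_eq_one_or_neg_one hν (hδ m)
  have mem_closure (a k : ℤ) : τ ^ a * ν ^ k ∈ Subgroup.closure {τ, ν} :=
    mul_mem (zpow_mem (Subgroup.subset_closure (by simp)) a)
      (zpow_mem (Subgroup.subset_closure (by simp)) k)
  have via_n : (S : Set G) <• (τ ^ n * (ω * τ * ω)) =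
      (S : Set G) <• (τ ^ ι (ι n + δ n) * ν ^ (e (ι n + δ n) + e n)) := by
    rw [rightCoset_mul_omega_tau_omega (semiconj n) (hων.zpow_right _) (coset_eq n),
      ← _root_.zpow_add, ← rightCoset_assoc, coset_eq, rightCoset_assoc, mul_assoc,
      ← _root_.zpow_add]
  have via_pred : (S : Set G) <• (τ ^ n * (ω * τ * ω)) =
      (S : Set G) <• (τ ^ (ι (n - 1) - δ (n - 1)) * ν ^ e (n - 1)) := by
    rw [_root_.zpow_sub τ (ι _),
      ← rightCoset_mul_tau_mul_omega_tau_omega (semiconj (n - 1)) hωτ (coset_eq (n - 1)),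
      ← _root_.zpow_add_one, sub_add_cancel]
  exact eq_of_zpow_mul_zpow_eq hν hτ <| eq_of_rightCoset_eq_of_disjoint hS
    (mem_closure _ _) (mem_closure _ _) (via_n.symm.trans via_pred)

end Group

lemma mem_pmI_iff {g : GL2Z} : g ∈ pmI ↔ g = 1 ∨ g = -1 := by
  refine Subgroup.mem_zpowers_iff.trans ⟨?_, ?_⟩
  · rintro ⟨k, rfl⟩
    exact (Int.even_or_odd k).imp Even.neg_one_zpow Odd.neg_one_zpow
  · rintro (rfl | rfl)
    exacts [⟨0, _root_.zpow_zero _⟩, ⟨1, _root_.zpow_one _⟩]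

lemma pr_neg (g : GL2Z) : pr (-g) = pr g := by
  have h : pr (-1) = 1 := (QuotientGroup.eq_one_iff _).mpr (mem_pmI_iff.mpr (Or.inr rfl))
  rw [← neg_one_mul, map_mul, h, one_mul]

lemma semiconjBy_nu_tau : SemiconjBy nu tau tau⁻¹ :=
  have h : SemiconjBy nuGL tauGL tauGL⁻¹ := Units.ext (by decide)
  h.map pr

lemma commute_omega_nu : Commute omega nu := by
  have h : omegaGL * nuGL = -(nuGL * omegaGL) := Units.ext (by decide)
  change pr omegaGL * pr nuGL = pr nuGL * pr omegaGL
  rw [← map_mul, h, pr_neg, map_mul]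

lemma omega_mul_tau_mul_omega : omega * tau * omega = tau⁻¹ * omega * tau⁻¹ := by
  have h : omegaGL * tauGL * omegaGL = tauGL⁻¹ * omegaGL * tauGL⁻¹ := Units.ext (by decide)
  exact congrArg pr h

lemma tauGL_eq_T : tauGL = ModularGroup.T := Units.ext rfl

lemma coe_tauGL_zpow (n : ℤ) : (tauGL ^ n : GL2Z).val = !![1, n; 0, 1] := by
  rw [tauGL_eq_T, ← map_zpow, Matrix.SpecialLinearGroup.coe_GL_coe_matrix,
    ModularGroup.coe_T_zpow]

lemma not_isOfFinOrder_tau : ¬IsOfFinOrder tau := by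
  rw [isOfFinOrder_iff_zpow_eq_one]
  rintro ⟨n, hn, h⟩
  have hmem : tauGL ^ n ∈ pmI := (QuotientGroup.eq_one_iff _).mp ((map_zpow pr tauGL n).trans h)
  have hentry : (tauGL ^ n : GL2Z).val 0 1 = 0 := by
    rcases mem_pmI_iff.mp hmem with h1 | h1 <;> simp [h1]
  rw [coe_tauGL_zpow] at hentry
  exact hn hentry

/-- For a Neumann subgroup Ŝ of M̂ = PGL(2,ℤ), the functions
ι : ℤ → ℤ and δ : ℤ → {1,−1} determined by Ŝτⁿω = Ŝτ^{ι(n)}ν^{(1−δ(n))/2}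
satisfy ι(ι(n) + δ(n)) = ι(n−1) − δ(n−1) for every n ∈ ℤ. -/
theorem neumann_iota_functional_equation
    (Shat : Subgroup Mhat) (hN : IsNeumann Shat)
    (iota : ℤ → ℤ) (delta : ℤ → ℤ) (hdelta : ∀ n, delta n = 1 ∨ delta n = -1)
    (hcoset : ∀ n : ℤ,
      (tau ^ n * omega) * (tau ^ iota n * nu ^ ((1 - delta n) / 2))⁻¹ ∈ Shat) :
    ∀ n : ℤ, iota (iota n + delta n) = iota (n - 1) - delta (n - 1) :=
  neumann_iota_functional_equation_general semiconjBy_nu_tau commute_omega_nu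
    omega_mul_tau_mul_omega not_isOfFinOrder_tau (disjoint_iff.mpr hN.2) hdelta hcoset
end
end

section
/- Let Ŝ be a Neumann subgroup of M̂ = PGL(2,ℤ), and let ι : ℤ → ℤ and δ : ℤ → {1,−1} be the unique functions satisfying Ŝ τ^n ω = Ŝ τ^{ι(n)} ν^{(1−δ(n))/2} for all n ∈ ℤ. Suppose g ∈ M̂ and the three right cosets Ŝg, Ŝgφ, Ŝgφ² equal Ŝ τ^k ν^{ε_k}, Ŝ τ^l ν^{ε_l}, Ŝ τ^m ν^{ε_m} respectively, for integers k, l, m and ε_k, ε_l, ε_m ∈ {0,1}. Then δ(k)·δ(l)·δ(m) = 1. -/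
open Matrix Pointwise

noncomputable section

/-!
If `Ŝ ∩ T̂` has determinant one, the sign of a coset `Ŝ τ^n ν^ε`, namely
`det (τ^n ν^ε) = (-1)^ε`, is well defined. As `ν` commutes with `ω`, right multiplication by `ω`
multiplies the sign of `Ŝ τ^n ν^ε` by `δ n`, and right multiplication by `τ` preserves the sign.
Since `φ = ω τ` and `φ ^ 3 = 1`, going once around the cycle `Ŝg, Ŝgφ, Ŝgφ²` multiplies the sign
by `δ k * δ l * δ m` and returns to the initial coset.
-/

lemma map_eq_map_of_mul_inv_mem {G A : Type*} [Group G] [Group A] {S T : Subgroup G} {χ : G →* A}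
    (hST : S ⊓ T ≤ χ.ker) {x a b : G} (ha : a ∈ T) (hb : b ∈ T)
    (hxa : x * a⁻¹ ∈ S) (hxb : x * b⁻¹ ∈ S) : χ a = χ b := by
  have hS : a * b⁻¹ ∈ S := by simpa [mul_assoc] using S.mul_mem (S.inv_mem hxa) hxb
  have hker : χ (a * b⁻¹) = 1 := hST ⟨hS, T.mul_mem ha (T.inv_mem hb)⟩
  rwa [map_mul, map_inv, mul_inv_eq_one] at hker

lemma coe_neg_one_zpow_half_one_sub {d : ℤ} (hd : d = 1 ∨ d = -1) :
    (((-1 : ℤˣ) ^ ((1 - d) / 2) : ℤˣ) : ℤ) = d := by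
  rcases hd with rfl | rfl <;> decide

namespace Mhat

lemma pr_neg (a : GL2Z) : pr (-a) = pr a := by
  have hpr : pr (-1) = 1 := (QuotientGroup.eq_one_iff _).2 (Subgroup.mem_zpowers (-1))
  rw [← neg_one_mul, map_mul, hpr, one_mul]

lemma phi_eq_omega_mul_tau : phi = omega * tau := by
  have hGL : phiGL = omegaGL * tauGL := by decide
  rw [phi, hGL, map_mul, omega, tau]

lemma phi_pow_three : phi ^ 3 = 1 := by
  have hGL : phiGL ^ 3 = -1 := by decide
  rw [phi, ← map_pow, hGL, pr_neg, map_one]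

lemma commute_nu_omega : Commute nu omega := by
  have hGL : nuGL * omegaGL = -(omegaGL * nuGL) := by decide
  rw [Commute, SemiconjBy, nu, omega, ← map_mul, ← map_mul, hGL, pr_neg]

lemma pmI_le_ker_det : pmI ≤ (GeneralLinearGroup.det : GL2Z →* ℤˣ).ker := by
  rw [pmI, Subgroup.zpowers_le, MonoidHom.mem_ker]
  decide

/-- The determinant of a class in PGL(2,ℤ), well defined because `det (-I) = 1` in even
dimension. -/
def det : Mhat →* ℤˣ := QuotientGroup.lift pmI GeneralLinearGroup.det pmI_le_ker_det

lemma ker_det : det.ker = Msub := QuotientGroup.ker_lift pmI _ pmI_le_ker_det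

lemma det_tau : det tau = 1 := by
  change GeneralLinearGroup.det tauGL = 1
  decide

lemma det_nu : det nu = -1 := by
  change GeneralLinearGroup.det nuGL = -1
  decide

lemma det_tau_zpow_mul_nu_zpow (n e : ℤ) : det (tau ^ n * nu ^ e) = (-1) ^ e := by
  rw [map_mul, map_zpow, map_zpow, det_tau, det_nu, _root_.one_zpow, one_mul]

lemma tau_mem_That : tau ∈ That := Subgroup.subset_closure (Set.mem_insert _ _)

lemma nu_mem_That : nu ∈ That := Subgroup.subset_closure (Set.mem_insert_of_mem _ rfl)

lemma tau_zpow_mul_nu_zpow_mem_That (n e : ℤ) : tau ^ n * nu ^ e ∈ That :=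
  That.mul_mem (That.zpow_mem tau_mem_That n) (That.zpow_mem nu_mem_That e)

section Cosets

variable {S : Subgroup Mhat} {x : Mhat} {k l e f i d : ℤ}

lemma mul_omega_mul_inv_mem (homega : (tau ^ k * omega) * (tau ^ i * nu ^ d)⁻¹ ∈ S)
    (hx : x * (tau ^ k * nu ^ e)⁻¹ ∈ S) :
    (x * omega) * (tau ^ i * nu ^ (d + e))⁻¹ ∈ S := by
  have hcomm : (nu ^ e)⁻¹ * omega = omega * (nu ^ e)⁻¹ :=
    (commute_nu_omega.zpow_left e).inv_left.eq
  have hmul : (x * omega) * (tau ^ i * nu ^ (d + e))⁻¹ =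
      (x * (tau ^ k * nu ^ e)⁻¹) * ((tau ^ k * omega) * (tau ^ i * nu ^ d)⁻¹) :=
    calc (x * omega) * (tau ^ i * nu ^ (d + e))⁻¹
        = x * (omega * (nu ^ e)⁻¹) * (tau ^ i * nu ^ d)⁻¹ := by group
      _ = x * ((nu ^ e)⁻¹ * omega) * (tau ^ i * nu ^ d)⁻¹ := by rw [hcomm]
      _ = _ := by group
  exact hmul ▸ S.mul_mem hx homega

lemma neg_one_zpow_eq_of_mul_phi (hS : S ⊓ That ≤ Msub)
    (homega : (tau ^ k * omega) * (tau ^ i * nu ^ d)⁻¹ ∈ S)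
    (hx : x * (tau ^ k * nu ^ e)⁻¹ ∈ S) (hxphi : (x * phi) * (tau ^ l * nu ^ f)⁻¹ ∈ S) :
    (-1 : ℤˣ) ^ f = (-1) ^ d * (-1) ^ e := by
  have hxphi' : (x * phi) * (tau ^ i * nu ^ (d + e) * tau)⁻¹ ∈ S := by
    have hmul : (x * phi) * (tau ^ i * nu ^ (d + e) * tau)⁻¹ =
        (x * omega) * (tau ^ i * nu ^ (d + e))⁻¹ := by
      rw [phi_eq_omega_mul_tau]
      group
    exact hmul ▸ mul_omega_mul_inv_mem homega hx
  calc (-1 : ℤˣ) ^ f = det (tau ^ l * nu ^ f) := (det_tau_zpow_mul_nu_zpow l f).symm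
    _ = det (tau ^ i * nu ^ (d + e) * tau) :=
      map_eq_map_of_mul_inv_mem (hS.trans ker_det.ge) (tau_zpow_mul_nu_zpow_mem_That l f)
        (That.mul_mem (tau_zpow_mul_nu_zpow_mem_That i (d + e)) tau_mem_That) hxphi hxphi'
    _ = (-1) ^ d * (-1) ^ e := by
      rw [map_mul, det_tau_zpow_mul_nu_zpow, det_tau, mul_one, _root_.zpow_add]

lemma neg_one_zpow_mul_eq_one_of_phi_cycle (hS : S ⊓ That ≤ Msub) {m ek el em : ℤ}
    {i d : ℤ → ℤ} (homega : ∀ n ∈ ({k, l, m} : Set ℤ),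
      (tau ^ n * omega) * (tau ^ i n * nu ^ d n)⁻¹ ∈ S)
    (hk : x * (tau ^ k * nu ^ ek)⁻¹ ∈ S)
    (hl : (x * phi) * (tau ^ l * nu ^ el)⁻¹ ∈ S)
    (hm : (x * phi ^ 2) * (tau ^ m * nu ^ em)⁻¹ ∈ S) :
    (-1 : ℤˣ) ^ d k * (-1) ^ d l * (-1) ^ d m = 1 := by
  have hphi_phi : x * phi * phi = x * phi ^ 2 := by rw [mul_assoc, ← pow_two]
  have hreturn : x * phi ^ 2 * phi = x := by rw [mul_assoc, ← pow_succ, phi_pow_three, mul_one]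
  have hkl : (-1 : ℤˣ) ^ el = (-1) ^ d k * (-1) ^ ek :=
    neg_one_zpow_eq_of_mul_phi hS (homega k (by simp)) hk hl
  have hlm : (-1 : ℤˣ) ^ em = (-1) ^ d l * (-1) ^ el :=
    neg_one_zpow_eq_of_mul_phi hS (homega l (by simp)) hl (hphi_phi.symm ▸ hm)
  have hmk : (-1 : ℤˣ) ^ ek = (-1) ^ d m * (-1) ^ em :=
    neg_one_zpow_eq_of_mul_phi hS (homega m (by simp)) hm (hreturn.symm ▸ hk)
  have hcycle : (-1 : ℤˣ) ^ d m * ((-1) ^ d l * (-1) ^ d k) * (-1) ^ ek = (-1) ^ ek := by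
    rw [mul_assoc, mul_assoc, ← hkl, ← hlm, ← hmk]
  rw [mul_comm, mul_comm (_ ^ d k)]
  exact mul_eq_right.1 hcycle

end Cosets

end Mhat

open Mhat in
theorem neumann_delta_product_on_B_cycle_general
    {S : Subgroup Mhat} (hS : S ⊓ That ≤ Msub) {iota delta : ℤ → ℤ} {g : Mhat}
    {k l m ek el em : ℤ} (hdelta : ∀ n ∈ ({k, l, m} : Set ℤ), delta n = 1 ∨ delta n = -1)
    (hcoset : ∀ n ∈ ({k, l, m} : Set ℤ),
      (tau ^ n * omega) * (tau ^ iota n * nu ^ ((1 - delta n) / 2))⁻¹ ∈ S)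
    (hgk : g * (tau ^ k * nu ^ ek)⁻¹ ∈ S)
    (hgl : (g * phi) * (tau ^ l * nu ^ el)⁻¹ ∈ S)
    (hgm : (g * phi ^ 2) * (tau ^ m * nu ^ em)⁻¹ ∈ S) :
    delta k * delta l * delta m = 1 := by
  have hunits : (-1 : ℤˣ) ^ ((1 - delta k) / 2) * (-1) ^ ((1 - delta l) / 2) *
      (-1) ^ ((1 - delta m) / 2) = 1 :=
    neg_one_zpow_mul_eq_one_of_phi_cycle hS hcoset hgk hgl hgm
  rw [← coe_neg_one_zpow_half_one_sub (hdelta k (by simp)),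
    ← coe_neg_one_zpow_half_one_sub (hdelta l (by simp)),
    ← coe_neg_one_zpow_half_one_sub (hdelta m (by simp)), ← Units.val_mul, ← Units.val_mul,
    hunits, Units.val_one]

/-- For a Neumann subgroup Ŝ of M̂ = PGL(2,ℤ) with associated
functions ι, δ, if the three cosets Ŝg, Ŝgφ, Ŝgφ² equal Ŝτ^k ν^{ε_k},
Ŝτ^l ν^{ε_l}, Ŝτ^m ν^{ε_m}, then δ(k)·δ(l)·δ(m) = 1. -/
theorem neumann_delta_product_on_B_cycle
    (Shat : Subgroup Mhat) (hN : IsNeumann Shat)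
    (iota : ℤ → ℤ) (delta : ℤ → ℤ) (hdelta : ∀ n, delta n = 1 ∨ delta n = -1)
    (hcoset : ∀ n : ℤ,
      (tau ^ n * omega) * (tau ^ iota n * nu ^ ((1 - delta n) / 2))⁻¹ ∈ Shat)
    (g : Mhat) (k l m : ℤ) (ek el em : ℤ)
    (hek : ek = 0 ∨ ek = 1) (hel : el = 0 ∨ el = 1) (hem : em = 0 ∨ em = 1)
    (hgk : g * (tau ^ k * nu ^ ek)⁻¹ ∈ Shat)
    (hgl : (g * phi) * (tau ^ l * nu ^ el)⁻¹ ∈ Shat)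
    (hgm : (g * phi ^ 2) * (tau ^ m * nu ^ em)⁻¹ ∈ Shat) :
    delta k * delta l * delta m = 1 :=
  neumann_delta_product_on_B_cycle_general (hN.2.trans_le bot_le) (fun n _ => hdelta n)
    (fun n _ => hcoset n) hgk hgl hgm
end
end
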